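/- Let α = α̃_1·α̃_2·…·α̃_k be the concatenation of compositions α̃_1,…,α̃_k, and let R_α = R_{α̃_1} ⊕ ⋯ ⊕ R_{α̃_k} be the direct sum of the connected ribbons R_{α̃_i} (a ribbon whose connected components, from top to bottom, are R_{α̃_1},…,R_{α̃_k}, no two components sharing any edge). Then for every partition ν of |α|, the Littlewood–Richardson coefficient c_{R_α}^ν equals the number of standard Young tableaux of shape ν whose descent set is a subset of S(α) containing S(α) \ { |α̃_1|+⋯+|α̃_r| : 1 ≤ r ≤ k }. -/

import Mathlib

namespace RibbonSupport

/-- A partition: a weakly decreasing list of positive integers. -/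
def IsPartition (a : List ℕ) : Prop := a.Pairwise (· ≥ ·) ∧ ∀ x ∈ a, 0 < x

/-- All parts of the list are at least `m`. -/
def PartsGE (a : List ℕ) (m : ℕ) : Prop := ∀ x ∈ a, m ≤ x

/-- Dominance order `lam ⪯ mu` on partitions of the same size. -/
def DomLE (lam mu : List ℕ) : Prop :=
  lam.sum = mu.sum ∧ ∀ i, (lam.take i).sum ≤ (mu.take i).sum

/-- The number of nonzero parts. -/
def lenp (p : List ℕ) : ℕ := p.countP (fun x => decide (x ≠ 0))

/-- `p` is an overlapping partition for the monotone ribbon with row lengths `a`: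
`p` has the same length as `a`, its last entry is `0`, and consecutive entries
decrease by `0` or `1`. -/
def IsOverlapSeq (a p : List ℕ) : Prop :=
  p.length = a.length ∧ p.getD (a.length - 1) 0 = 0 ∧
    ∀ i, i + 1 < a.length →
      p.getD i 0 = p.getD (i + 1) 0 ∨ p.getD i 0 = p.getD (i + 1) 0 + 1

/-- Rows `i` and `i+1` (0-based, top to bottom) of `R_a^p` overlap
(share exactly one column) exactly when `p_i = p_{i+1} + 1`. -/
def ovOf (p : List ℕ) : ℕ → Bool := fun i => decide (p.getD i 0 = p.getD (i + 1) 0 + 1)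

def rowOffset (a : List ℕ) (i : ℕ) : ℕ := (a.take i).sum

/-- `w` is the reading word (rows right-to-left, top to bottom) of a semistandard filling of
the ribbon with row lengths `a` (top to bottom) in which consecutive rows `i`, `i+1` share
exactly one column when `ov i = true` and no column otherwise.  Semistandardness amounts to:
within each row block the word is weakly decreasing (rows weakly increase left to right), and
at each overlapping gap the word strictly increases (columns strictly increase downwards). -/
def IsRibbonWord (a : List ℕ) (ov : ℕ → Bool) (w : List ℕ) : Prop :=
  w.length = a.sum ∧
  (∀ i j, i < a.length → j + 1 < a.getD i 0 →
    w.getD (rowOffset a i + j + 1) 0 ≤ w.getD (rowOffset a i + j) 0) ∧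
  (∀ i, i + 1 < a.length → ov i = true →
    w.getD (rowOffset a (i + 1) - 1) 0 < w.getD (rowOffset a (i + 1)) 0)

/-- Yamanouchi (lattice) word: each prefix has at least as many letters `j` as `j+1`. -/
def IsYam (w : List ℕ) : Prop := ∀ k j, (w.take k).count (j + 2) ≤ (w.take k).count (j + 1)

/-- The word `w` has content `nu` (and only positive letters). -/
def HasContent (w : List ℕ) (nu : List ℕ) : Prop :=
  (∀ j, w.count (j + 1) = nu.getD j 0) ∧ w.count 0 = 0

/-- There is an LR filling of the ribbon `(a, ov)` with content `nu`. -/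
def InSupportOv (a : List ℕ) (ov : ℕ → Bool) (nu : List ℕ) : Prop :=
  ∃ w : List ℕ, IsRibbonWord a ov w ∧ IsYam w ∧ HasContent w nu

/-- `nu` is in the Schur support of the monotone ribbon `R_a^p`. -/
def InSupport (a p nu : List ℕ) : Prop := InSupportOv a (ovOf p) nu

/-- `nu` is in the Schur support of the connected ribbon `R_a`. -/
def InSupportConn (a nu : List ℕ) : Prop := InSupportOv a (fun _ => true) nu

/-- `nu` belongs to the Schur interval `[a, (|a| - p₁, p₁)]` in dominance order. -/
def InInterval (a p nu : List ℕ) : Prop :=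
  DomLE a nu ∧ DomLE nu [a.sum - p.getD 0 0, p.getD 0 0]

/-- The Schur support of `R_a^p`, as a set of partitions. -/
def SupportSet (a p : List ℕ) : Set (List ℕ) := {nu | IsPartition nu ∧ InSupport a p nu}

/-- The Schur interval of `R_a^p`, as a set of partitions. -/
def IntervalSet (a p : List ℕ) : Set (List ℕ) := {nu | IsPartition nu ∧ InInterval a p nu}

/-- `R_a^p` has full Schur support. -/
def FullSupport (a p : List ℕ) : Prop := SupportSet a p = IntervalSet a p

/-- The Schur support of the connected ribbon `R_a`, as a set of partitions. -/
def SupportSetConn (a : List ℕ) : Set (List ℕ) := {nu | IsPartition nu ∧ InSupportConn a nu}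

/-- `ϱ_i` (1-based `i`): `Σ_{q=i+1}^{ℓ(a)} a_q − p_{i+1} + 1`. -/
def rho (a p : List ℕ) (i : ℕ) : ℕ := (a.drop i).sum + 1 - p.getD i 0

/-- Entry `j` (1-based) of the `i`-witness vector: `[ϱ_i − a_j]₊`. -/
def wit (a p : List ℕ) (i j : ℕ) : ℕ := rho a p i - a.getD (j - 1) 0

/-- Size of the `i`-witness vector. -/
def witSize (a p : List ℕ) (i : ℕ) : ℕ := ∑ j ∈ Finset.Icc 1 i, wit a p i j

/-! ### Tableaux -/

/-- Cells (0-based `(row, column)`) of the Young diagram of `lam`. -/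
def cells (lam : List ℕ) : Finset (ℕ × ℕ) :=
  (Finset.range lam.length ×ˢ Finset.range (lam.sum + 1)).filter
    (fun x => x.2 < lam.getD x.1 0)

/-- `T` is a semistandard Young tableau of shape `lam` and content `al`
(normalized to vanish off the diagram). -/
def IsTab (lam al : List ℕ) (T : ℕ × ℕ → ℕ) : Prop :=
  (∀ x, x ∉ cells lam → T x = 0) ∧
  (∀ x ∈ cells lam, 1 ≤ T x) ∧
  (∀ i c, (i, c + 1) ∈ cells lam → T (i, c) ≤ T (i, c + 1)) ∧
  (∀ i c, (i + 1, c) ∈ cells lam → T (i, c) < T (i + 1, c)) ∧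
  (∀ k, ((cells lam).filter (fun x => T x = k + 1)).card = al.getD k 0)

/-- Standardization of a tableau: entries are renumbered `1, …, N` in increasing order of
value, entries of equal value being numbered from southwest to northeast (by column). -/
def stdz (lam : List ℕ) (T : ℕ × ℕ → ℕ) : ℕ × ℕ → ℕ := fun x =>
  if x ∈ cells lam then
    ((cells lam).filter (fun y => T y < T x ∨ (T y = T x ∧ y.2 < x.2))).card + 1
  else 0

/-- `n` is a descent of the standard tableau `U`: the entry `n+1` lies in a strictly
lower row than the entry `n`. -/
def IsDescent (lam : List ℕ) (U : ℕ × ℕ → ℕ) (n : ℕ) : Prop :=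
  ∃ x ∈ cells lam, ∃ y ∈ cells lam, U x = n ∧ U y = n + 1 ∧ x.1 < y.1

/-- `S(al)`: the set of proper partial sums of the composition `al`. -/
def Sset (al : List ℕ) : Set ℕ := {n | ∃ k, 0 < k ∧ k < al.length ∧ n = (al.take k).sum}

/-- `s ∈ D(T)`: some entry `s+1` of `T` lies in a strictly lower row than some entry `s`. -/
def TabDescent (lam : List ℕ) (T : ℕ × ℕ → ℕ) (s : ℕ) : Prop :=
  ∃ x ∈ cells lam, ∃ y ∈ cells lam, T x = s ∧ T y = s + 1 ∧ x.1 < y.1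

/-- The word `w_{T̂}` of `T`: its `u`-th letter (1-based) is the 1-based row index of the
entry `u` of the standardization `T̂` of `T`. -/
def wordOf (lam : List ℕ) (T : ℕ × ℕ → ℕ) : List ℕ :=
  (List.range lam.sum).map fun n =>
    ∑ x ∈ (cells lam).filter (fun x => stdz lam T x = n + 1), (x.1 + 1)

/-- `j ∈ {2, …, ℓ(al)}` is a critical number of `T ∈ Tab(lam, al)`:
`w_{α_1+⋯+α_{j-1}} = w_{α_1+⋯+α_{j-1}+1}` in the word of `T`. -/
def CriticalNum (lam al : List ℕ) (T : ℕ × ℕ → ℕ) (j : ℕ) : Prop :=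
  2 ≤ j ∧ j ≤ al.length ∧
    (wordOf lam T).getD ((al.take (j - 1)).sum - 1) 0 =
      (wordOf lam T).getD ((al.take (j - 1)).sum) 0

/-- `j ∈ {2, …, ℓ(al)}` is a negligible critical number of `T`:
`w_{α_1+⋯+α_{j-1}} > w_{α_1+⋯+α_{j-1}+1}` in the word of `T`. -/
def NegligibleNum (lam al : List ℕ) (T : ℕ × ℕ → ℕ) (j : ℕ) : Prop :=
  2 ≤ j ∧ j ≤ al.length ∧
    (wordOf lam T).getD ((al.take (j - 1)).sum) 0 <
      (wordOf lam T).getD ((al.take (j - 1)).sum - 1) 0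

/-- The overlapping partition of the ribbon encoded by its gap pattern `b`
(`b j = true` iff rows `j` and `j+1`, 0-based, overlap). -/
def povOf (b : List Bool) : List ℕ :=
  (List.range (b.length + 1)).map fun i => (b.drop i).count true

/-! ### Connected ribbons with rows in arbitrary order -/

/-- Starting column (0-based) of row `i` of the connected ribbon with row lengths `b`. -/
def startConn (b : List ℕ) (i : ℕ) : ℕ := (b.drop (i + 1)).sum + (i + 1) - b.length

/-- Number of columns of the connected ribbon with row lengths `b`. -/
def ncols (b : List ℕ) : ℕ := b.sum + 1 - b.length

/-- Length of column `c` of the connected ribbon with row lengths `b`. -/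
def colLen (b : List ℕ) (c : ℕ) : ℕ :=
  ((Finset.range b.length).filter
    (fun i => startConn b i ≤ c ∧ c < startConn b i + b.getD i 0)).card

/-- Deletion rank of row `j`: the number of rows deleted strictly before row `j` when one
repeatedly deletes a longest remaining row in highest (most northern) position. -/
def delRank (g : List ℕ) (j : ℕ) : ℕ :=
  ((Finset.range g.length).filter
    (fun j' => g.getD j 0 < g.getD j' 0 ∨ (g.getD j' 0 = g.getD j 0 ∧ j' < j))).card

/-- The overlapping partition of the connected ribbon with row lengths `g`:
its `(d+1)`-st entry is the number of length-two columns of the ribbon remaining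
after deleting `d` rows as above, i.e. the number of adjacent pairs of surviving rows. -/
def ppiList (g : List ℕ) : List ℕ :=
  (List.range g.length).map fun d =>
    ((Finset.range (g.length - 1)).filter
      (fun j => d ≤ delRank g j ∧ d ≤ delRank g (j + 1))).card



/-! ### Combinatorics of the ribbon condition -/

theorem rowOffset_succ (a : List ℕ) (i : ℕ) :
    rowOffset a (i + 1) = rowOffset a i + a.getD i 0 := by
  unfold rowOffset
  by_cases h : i < a.length
  · rw [List.sum_take_succ _ _ h]
    simp [h]
  · have h' : a.length ≤ i := by omega
    rw [List.take_of_length_le h', List.take_of_length_le (by omega)]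
    simp [h']

theorem rowOffset_mono (a : List ℕ) : Monotone (rowOffset a) :=
  monotone_nat_of_le_succ fun i => by rw [rowOffset_succ]; omega

theorem rowOffset_length (a : List ℕ) : rowOffset a a.length = a.sum := by
  simp [rowOffset]

theorem rowOffset_lt (a : List ℕ) (ha : ∀ x ∈ a, 0 < x) {i k : ℕ} (hik : i < k)
    (hi : i < a.length) : rowOffset a i < rowOffset a k := by
  have h1 : rowOffset a (i + 1) ≤ rowOffset a k := rowOffset_mono a hik
  rw [rowOffset_succ] at h1
  have h2 : 0 < a.getD i 0 := by
    have := ha a[i] (List.getElem_mem hi)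
    simpa [hi] using this
  omega

theorem exists_row (a : List ℕ) (m : ℕ) (hm : m < a.sum) :
    ∃ i, i < a.length ∧ rowOffset a i ≤ m ∧ m < rowOffset a (i + 1) := by
  have hex : ∃ k, m < rowOffset a k := ⟨a.length, by rw [rowOffset_length]; exact hm⟩
  classical
  have hs := Nat.find_spec hex
  have hle : Nat.find hex ≤ a.length := Nat.find_min' hex (by rw [rowOffset_length]; exact hm)
  cases hk : Nat.find hex with
  | zero => rw [hk] at hs; simp [rowOffset] at hs
  | succ i =>
    have hmin : ¬ m < rowOffset a i := Nat.find_min hex (by omega)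
    rw [hk] at hs
    exact ⟨i, by omega, by omega, hs⟩

theorem block_sum (L : List (List ℕ)) (r : ℕ) :
    ((L.take r).map List.sum).sum =
      rowOffset L.flatten ((L.take r).map List.length).sum := by
  unfold rowOffset
  have h := List.take_sum_flatten L r
  rw [List.map_take]
  rw [List.map_take, h, List.sum_flatten, List.map_take]

/-- Descents of a word. -/
def WDesc (w : List ℕ) (n : ℕ) : Prop :=
  1 ≤ n ∧ n < w.length ∧ w.getD (n - 1) 0 < w.getD n 0

theorem ribbon_iff (a : List ℕ) (ha : ∀ x ∈ a, 0 < x) (B : ℕ → Prop) (B' : ℕ → Prop)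
    (ov : ℕ → Bool) (hov : ∀ j, ov j = true ↔ ¬ B (j + 1))
    (hB : ∀ k, 0 < k → k < a.length → (B' (rowOffset a k) ↔ B k))
    (w : List ℕ) (hw : w.length = a.sum) :
    IsRibbonWord a ov w ↔
      (∀ n, WDesc w n → n ∈ Sset a) ∧ (∀ n, n ∈ Sset a → ¬ B' n → WDesc w n) := by
  constructor
  · rintro ⟨-, h1, h2⟩
    constructor
    · rintro n ⟨hn1, hn2, hn3⟩
      obtain ⟨i, hi, hi1, hi2⟩ := exists_row a (n - 1) (by omega)
      have hi3 := hi2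
      rw [rowOffset_succ] at hi3
      by_cases hj : (n - 1 - rowOffset a i) + 1 < a.getD i 0
      · have := h1 i (n - 1 - rowOffset a i) hi hj
        rw [show rowOffset a i + (n - 1 - rowOffset a i) = n - 1 by omega,
          show n - 1 + 1 = n by omega] at this
        omega
      · have hn : n = rowOffset a (i + 1) := by rw [rowOffset_succ]; omega
        refine ⟨i + 1, by omega, ?_, hn⟩
        by_contra hlt
        have : i + 1 = a.length := by omega
        rw [this, rowOffset_length] at hn
        omega
    · rintro n ⟨k, hk0, hk, hn⟩ hnB
      change n = rowOffset a k at hn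
      obtain ⟨i, rfl⟩ : ∃ i, k = i + 1 := ⟨k - 1, by omega⟩
      have hnb : ¬ B (i + 1) := by
        rw [← hB _ hk0 hk, ← hn]; exact hnB
      have h3 := h2 i hk ((hov i).2 hnb)
      have h4 := rowOffset_lt a ha hk0 (by omega)
      have h5 := rowOffset_lt a ha hk hk
      rw [rowOffset_length] at h5
      have h6 : rowOffset a 0 = 0 := by simp [rowOffset]
      refine ⟨by omega, by omega, ?_⟩
      rw [hn]; exact h3
  · rintro ⟨h1, h2⟩
    refine ⟨hw, ?_, ?_⟩
    · intro i j hi hj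
      by_contra hlt
      push Not at hlt
      have hlen : rowOffset a (i + 1) ≤ a.sum := by
        rw [← rowOffset_length]; exact rowOffset_mono a hi
      rw [rowOffset_succ] at hlen
      obtain ⟨k, -, hk, hn⟩ := h1 (rowOffset a i + j + 1) ⟨by omega, by omega, by simpa using hlt⟩
      change _ = rowOffset a k at hn
      rcases Nat.lt_or_ge i k with h | h
      · have := rowOffset_mono a (show i + 1 ≤ k from h)
        rw [rowOffset_succ] at this
        omega
      · have := rowOffset_mono a h
        omega
    · intro i hi ho
      have := h2 (rowOffset a (i + 1)) ⟨i + 1, by omega, hi, rfl⟩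
        (by rw [hB _ (by omega) hi]; exact (hov i).1 ho)
      exact this.2.2

/-! ### Words and tableaux -/

theorem mem_cells (nu : List ℕ) (i c : ℕ) : (i, c) ∈ cells nu ↔ c < nu.getD i 0 := by
  unfold cells
  simp only [Finset.mem_filter, Finset.mem_product, Finset.mem_range]
  constructor
  · exact fun h => h.2
  · intro h
    have hi : i < nu.length := by
      by_contra hi
      simp [Nat.le_of_not_lt hi] at h
    refine ⟨⟨hi, ?_⟩, h⟩
    have : nu.getD i 0 ≤ nu.sum := by
      rw [List.getD_eq_getElem _ _ hi]
      exact List.single_le_sum (by simp) _ (List.getElem_mem hi)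
    omega

theorem part_anti (nu : List ℕ) (hnu : IsPartition nu) (i : ℕ) :
    nu.getD (i + 1) 0 ≤ nu.getD i 0 := by
  by_cases h : i + 1 < nu.length
  · rw [List.getD_eq_getElem _ _ h, List.getD_eq_getElem _ _ (by omega : i < nu.length)]
    exact List.pairwise_iff_getElem.1 hnu.1 i (i + 1) (by omega) h (by omega)
  · rw [List.getD_eq_default _ _ (by omega)]
    omega

/-- Position `n` of `w` carries the letter `i + 1`. -/
def At (w : List ℕ) (i n : ℕ) : Prop := w[n]? = some (i + 1)

instance (w : List ℕ) (i : ℕ) : DecidablePred (At w i) := fun n => by unfold At; infer_instance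

theorem count_At (w : List ℕ) (i k : ℕ) : Nat.count (At w i) k = (w.take k).count (i + 1) := by
  induction k with
  | zero => simp
  | succ k ih =>
    rw [Nat.count_succ, ih, List.take_add_one, List.count_append]
    congr 1
    unfold At
    by_cases hk : k < w.length
    · simp [hk, List.count_singleton]
    · simp [Nat.le_of_not_lt hk]

theorem At_lt {w : List ℕ} {i n : ℕ} (h : At w i n) : n < w.length := by
  unfold At at h
  exact (List.getElem?_eq_some_iff.1 h).1

theorem count_At_length (w : List ℕ) (i : ℕ) : Nat.count (At w i) w.length = w.count (i + 1) := by
  rw [count_At]; simp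

theorem At_finite (w : List ℕ) (i : ℕ) : (Set.ofPred (At w i)).Finite :=
  (Set.finite_lt_nat w.length).subset fun _ h => At_lt h

/-- Position of the `(c+1)`-st occurrence of `i+1`. -/
theorem nth_spec (w : List ℕ) (i c : ℕ) (h : c < w.count (i + 1)) :
    At w i (Nat.nth (At w i) c) ∧ Nat.count (At w i) (Nat.nth (At w i) c) = c := by
  rw [← count_At_length] at h
  have hc : ∀ hf : (Set.ofPred (At w i)).Finite, c < hf.toFinset.card := by
    intro hf
    refine lt_of_lt_of_le h ?_
    rw [Nat.count_eq_card_filter_range]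
    apply Finset.card_le_card
    intro x hx
    rw [Set.Finite.mem_toFinset]
    exact (Finset.mem_filter.1 hx).2
  exact ⟨Nat.nth_mem c hc, Nat.count_nth hc⟩

/-- The tableau of a word. -/
noncomputable def UofW (nu w : List ℕ) : ℕ × ℕ → ℕ := fun x =>
  if x ∈ cells nu then Nat.nth (At w x.1) x.2 + 1 else 0

/-- The word of a standard tableau. -/
def WofU (nu : List ℕ) (U : ℕ × ℕ → ℕ) : List ℕ :=
  (List.range nu.sum).map fun n => ∑ x ∈ (cells nu).filter (fun x => U x = n + 1), (x.1 + 1)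

section word
variable (nu w : List ℕ)

theorem UofW_spec (hC : HasContent w nu) {i c : ℕ} (h : (i, c) ∈ cells nu) :
    ∃ n, UofW nu w (i, c) = n + 1 ∧ At w i n ∧ Nat.count (At w i) n = c := by
  refine ⟨Nat.nth (At w i) c, ?_, ?_⟩
  · simp [UofW, h]
  · apply nth_spec
    rw [hC.1, ← mem_cells]; exact h

theorem UofW_unique (hC : HasContent w nu) {i n : ℕ} (h : At w i n) :
    (i, Nat.count (At w i) n) ∈ cells nu ∧ UofW nu w (i, Nat.count (At w i) n) = n + 1 := by
  have h1 : (i, Nat.count (At w i) n) ∈ cells nu := by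
    rw [mem_cells, ← hC.1, ← count_At_length]
    exact Nat.count_strict_mono h (At_lt h)
  refine ⟨h1, ?_⟩
  simp [UofW, h1, Nat.nth_count h]

theorem At_exists (hC : HasContent w nu) {n : ℕ} (h : n < w.length) : ∃ i, At w i n := by
  have h0 : w[n] ≠ 0 := by
    intro h0
    have := List.count_eq_zero.1 hC.2
    exact this (h0 ▸ List.getElem_mem h)
  exact ⟨w[n] - 1, by unfold At; rw [List.getElem?_eq_getElem h]; congr; omega⟩

theorem At_inj {w : List ℕ} {i j n : ℕ} (h : At w i n) (h' : At w j n) : i = j := by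
  unfold At at h h'
  rw [h] at h'
  simpa using h'

theorem filter_UofW (hC : HasContent w nu) {i n : ℕ} (h : At w i n) :
    (cells nu).filter (fun x => UofW nu w x = n + 1) = {(i, Nat.count (At w i) n)} := by
  ext ⟨j, c⟩
  simp only [Finset.mem_filter, Finset.mem_singleton]
  constructor
  · rintro ⟨h1, h2⟩
    obtain ⟨m, hm1, hm2, hm3⟩ := UofW_spec nu w hC h1
    have : m = n := by omega
    subst this
    have := At_inj h hm2
    subst this
    rw [hm3]
  · intro he
    rw [he]
    exact UofW_unique nu w hC h

theorem UofW_tab (hnu : IsPartition nu) (hlen : w.length = nu.sum)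
    (hY : IsYam w) (hC : HasContent w nu) : IsTab nu (List.replicate nu.sum 1) (UofW nu w) := by
  refine ⟨?_, ?_, ?_, ?_, ?_⟩
  · intro x hx
    simp [UofW, hx]
  · intro x hx
    simp [UofW, hx]
  · intro i c h
    have h' : (i, c) ∈ cells nu := by rw [mem_cells] at h ⊢; omega
    obtain ⟨m, hm, hm2, hm3⟩ := UofW_spec nu w hC h
    obtain ⟨n, hn, hn2, hn3⟩ := UofW_spec nu w hC h'
    rw [hm, hn]
    by_contra hlt
    have := Nat.count_monotone (At w i) (show m ≤ n by omega)
    omega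
  · intro i c h
    have h' : (i, c) ∈ cells nu := by
      have := part_anti nu hnu i
      rw [mem_cells] at h ⊢; omega
    obtain ⟨m, hm, hm2, hm3⟩ := UofW_spec nu w hC h
    obtain ⟨n, hn, hn2, hn3⟩ := UofW_spec nu w hC h'
    rw [hm, hn]
    by_contra hlt
    have hne : m ≠ n := by
      rintro rfl
      have := At_inj hm2 hn2
      omega
    have h1 := Nat.count_monotone (At w i) (show m + 1 ≤ n by omega)
    have h2 := hY (m + 1) i
    rw [← count_At, ← count_At, Nat.count_succ, if_pos hm2] at h2
    omega
  · intro k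
    by_cases hk : k < nu.sum
    · obtain ⟨i, hi⟩ := At_exists nu w hC (n := k) (by omega)
      rw [filter_UofW nu w hC hi]
      simp [hk]
    · rw [List.getD_eq_default _ _ (by simp; omega), Finset.card_eq_zero,
        Finset.filter_eq_empty_iff]
      rintro ⟨i, c⟩ hx he
      obtain ⟨m, hm, hm2, hm3⟩ := UofW_spec nu w hC hx
      have := At_lt hm2
      omega

theorem WofU_UofW (hlen : w.length = nu.sum) (hC : HasContent w nu) : WofU nu (UofW nu w) = w := by
  apply List.ext_getElem
  · simp [WofU, hlen]
  · intro n h1 h2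
    obtain ⟨i, hi⟩ := At_exists nu w hC h2
    simp only [WofU, List.getElem_map, List.getElem_range]
    rw [filter_UofW nu w hC hi, Finset.sum_singleton]
    unfold At at hi
    rw [List.getElem?_eq_getElem h2] at hi
    simpa using hi.symm

end word

section tab
variable (nu : List ℕ) (U : ℕ × ℕ → ℕ)

theorem U_filter (hU : IsTab nu (List.replicate nu.sum 1) U)
    {n : ℕ} (hn : n < nu.sum) :
    ∃ x, (cells nu).filter (fun x => U x = n + 1) = {x} := by
  have := hU.2.2.2.2 n
  rw [List.getD_eq_getElem _ _ (by simpa using hn), List.getElem_replicate] at this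
  exact Finset.card_eq_one.1 this

theorem U_range (hU : IsTab nu (List.replicate nu.sum 1) U)
    {x : ℕ × ℕ} (hx : x ∈ cells nu) : ∃ n, n < nu.sum ∧ U x = n + 1 := by
  have h1 := hU.2.1 x hx
  refine ⟨U x - 1, ?_, by omega⟩
  by_contra hlt
  have := hU.2.2.2.2 (U x - 1)
  rw [List.getD_eq_default _ _ (by simp; omega), Finset.card_eq_zero,
    Finset.filter_eq_empty_iff] at this
  exact this hx (by omega)

theorem W_At (hU : IsTab nu (List.replicate nu.sum 1) U)
    {i c n : ℕ} (hx : (i, c) ∈ cells nu) (h : U (i, c) = n + 1) :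
    At (WofU nu U) i n := by
  obtain ⟨m, hm, hm'⟩ := U_range nu U hU hx
  have : m = n := by omega
  subst this
  obtain ⟨y, hy⟩ := U_filter nu U hU hm
  have hmem : (i, c) ∈ (cells nu).filter (fun x => U x = m + 1) := by
    simp [hx, h]
  have hy' := hy
  rw [hy, Finset.mem_singleton] at hmem
  unfold At WofU
  rw [List.getElem?_map, List.getElem?_range hm]
  simp only [Option.map_some]
  rw [hy', ← hmem]
  simp

theorem W_At' (hU : IsTab nu (List.replicate nu.sum 1) U)
    {i n : ℕ} (h : At (WofU nu U) i n) :
    ∃ c, (i, c) ∈ cells nu ∧ U (i, c) = n + 1 := by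
  have hn : n < nu.sum := by simpa [WofU] using At_lt h
  obtain ⟨⟨j, c⟩, hy⟩ := U_filter nu U hU hn
  have hm : (j, c) ∈ (cells nu).filter (fun x => U x = n + 1) := by rw [hy]; simp
  rw [Finset.mem_filter] at hm
  have := At_inj h (W_At nu U hU hm.1 hm.2)
  subst this
  exact ⟨c, hm⟩

theorem U_row_lt (hU : IsTab nu (List.replicate nu.sum 1) U)
    {i c : ℕ} (h : (i, c + 1) ∈ cells nu) : U (i, c) < U (i, c + 1) := by
  have h0 : (i, c) ∈ cells nu := by rw [mem_cells] at h ⊢; omega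
  refine lt_of_le_of_ne (hU.2.2.1 i c h) ?_
  intro he
  obtain ⟨n, hn, hn'⟩ := U_range nu U hU h
  obtain ⟨y, hy⟩ := U_filter nu U hU hn
  have h1 : (i, c) ∈ (cells nu).filter (fun x => U x = n + 1) := by
    simp only [Finset.mem_filter]; exact ⟨h0, by omega⟩
  have h2 : (i, c + 1) ∈ (cells nu).filter (fun x => U x = n + 1) := by
    simp only [Finset.mem_filter]; exact ⟨h, by omega⟩
  rw [hy, Finset.mem_singleton] at h1 h2
  rw [← h1] at h2
  simp at h2

theorem U_row_lt' (hU : IsTab nu (List.replicate nu.sum 1) U)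
    {i c d : ℕ} (hcd : c < d) (h : (i, d) ∈ cells nu) : U (i, c) < U (i, d) := by
  induction d, hcd using Nat.le_induction with
  | base => exact U_row_lt nu U hU h
  | succ d hd ih =>
    have h0 : (i, d) ∈ cells nu := by rw [mem_cells] at h ⊢; omega
    exact (ih h0).trans (U_row_lt nu U hU h)

theorem count_W (hU : IsTab nu (List.replicate nu.sum 1) U)
    (i n : ℕ) : Nat.count (At (WofU nu U) i) n =
    ((Finset.range (nu.getD i 0)).filter (fun c => U (i, c) ≤ n)).card := by
  rw [Nat.count_eq_card_filter_range]
  symm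
  apply Finset.card_bij (fun c _ => U (i, c) - 1)
  · intro c hc
    simp only [Finset.mem_filter, Finset.mem_range] at hc ⊢
    have hx : (i, c) ∈ cells nu := (mem_cells _ _ _).2 hc.1
    have h1 := hU.2.1 _ hx
    exact ⟨by omega, W_At nu U hU hx (by omega)⟩
  · intro c hc d hd he
    simp only [Finset.mem_filter, Finset.mem_range] at hc hd
    have hx : (i, c) ∈ cells nu := (mem_cells _ _ _).2 hc.1
    have hy : (i, d) ∈ cells nu := (mem_cells _ _ _).2 hd.1
    have h1 := hU.2.1 _ hx
    have h2 := hU.2.1 _ hy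
    rcases lt_trichotomy c d with h | h | h
    · have := U_row_lt' nu U hU h hy
      omega
    · exact h
    · have := U_row_lt' nu U hU h hx
      omega
  · intro m hm
    simp only [Finset.mem_filter, Finset.mem_range] at hm
    obtain ⟨c, hc, hc'⟩ := W_At' nu U hU hm.2
    refine ⟨c, ?_, by omega⟩
    simp only [Finset.mem_filter, Finset.mem_range]
    exact ⟨(mem_cells _ _ _).1 hc, by omega⟩

theorem W_yam (hU : IsTab nu (List.replicate nu.sum 1) U)
    (hnu : IsPartition nu) : IsYam (WofU nu U) := by
  intro k j
  rw [← count_At, ← count_At, count_W nu U hU, count_W nu U hU]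
  apply Finset.card_le_card
  intro c hc
  simp only [Finset.mem_filter, Finset.mem_range] at hc ⊢
  have h1 := part_anti nu hnu j
  have h2 := hU.2.2.2.1 j c ((mem_cells _ _ _).2 hc.1)
  omega

theorem W_content (hU : IsTab nu (List.replicate nu.sum 1) U)
    : HasContent (WofU nu U) nu := by
  constructor
  · intro i
    rw [← count_At_length, count_W nu U hU, Finset.filter_true_of_mem, Finset.card_range]
    intro c hc
    obtain ⟨n, hn, hn'⟩ := U_range nu U hU ((mem_cells _ _ _).2 (Finset.mem_range.1 hc))
    simp [WofU] at hn' ⊢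
    omega
  · rw [List.count_eq_zero]
    intro h0
    simp only [WofU, List.mem_map, List.mem_range] at h0
    obtain ⟨n, hn, he⟩ := h0
    obtain ⟨y, hy⟩ := U_filter nu U hU hn
    rw [hy, Finset.sum_singleton] at he
    omega

theorem UofW_WofU (hU : IsTab nu (List.replicate nu.sum 1) U)
    : UofW nu (WofU nu U) = U := by
  funext ⟨i, c⟩
  by_cases hx : (i, c) ∈ cells nu
  · obtain ⟨n, hn, hn'⟩ := U_range nu U hU hx
    have hA := W_At nu U hU hx hn'
    have hc : Nat.count (At (WofU nu U) i) n = c := by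
      rw [count_W nu U hU]
      have : (Finset.range (nu.getD i 0)).filter (fun c => U (i, c) ≤ n) = Finset.range c := by
        ext d
        simp only [Finset.mem_filter, Finset.mem_range]
        constructor
        · rintro ⟨h1, h2⟩
          by_contra hlt
          rcases Nat.eq_or_lt_of_le (Nat.le_of_not_lt hlt) with h | h
          · subst h; omega
          · have := U_row_lt' nu U hU h ((mem_cells _ _ _).2 h1)
            omega
        · intro h
          have := U_row_lt' nu U hU h hx
          rw [mem_cells] at hx
          omega
      rw [this, Finset.card_range]
    have := (UofW_unique nu _ (W_content nu U hU) hA).2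
    rw [hc] at this
    rw [this, hn']
  · rw [hU.1 _ hx]
    simp [UofW, hx]

theorem getD_At {w : List ℕ} {i n : ℕ} (h : At w i n) : w.getD n 0 = i + 1 := by
  unfold At at h
  simp [List.getD, h]

theorem desc_iff (hU : IsTab nu (List.replicate nu.sum 1) U)
    (n : ℕ) : IsDescent nu U n ↔ WDesc (WofU nu U) n := by
  constructor
  · rintro ⟨⟨i, c⟩, hx, ⟨j, d⟩, hy, h1, h2, h3⟩
    have h4 := hU.2.1 _ hx
    have hA := W_At nu U hU hx (n := n - 1) (by omega)
    have hB := W_At nu U hU hy h2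
    refine ⟨by omega, At_lt hB, ?_⟩
    rw [getD_At hA, getD_At hB]
    simp at h3
    omega
  · rintro ⟨h1, h2, h3⟩
    have hC := W_content nu U hU
    obtain ⟨i, hi⟩ := At_exists nu _ hC (n := n - 1) (by omega)
    obtain ⟨j, hj⟩ := At_exists nu _ hC h2
    rw [getD_At hi, getD_At hj] at h3
    obtain ⟨c, hc, hc'⟩ := W_At' nu U hU hi
    obtain ⟨d, hd, hd'⟩ := W_At' nu U hU hj
    exact ⟨(i, c), hc, (j, d), hd, by omega, hd', by simp; omega⟩

end tab

/-- Corollary `l3new`(b): let `al = α̃₁·…·α̃ₖ` be the concatenation of the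
compositions in `L`, and let `R_al` be the direct sum of the connected ribbons `R_{α̃ᵢ}`
(rows `j`, `j+1` overlap iff `j+1` is not a cumulative row-length boundary of `L`).  Then for
every partition `nu` of `|al|`, the LR coefficient `c_{R_al}^{nu}` equals the number of
standard Young tableaux of shape `nu` whose descent set is a subset of `S(al)` containing
`S(al) \ { |α̃₁|+⋯+|α̃_r| : 1 ≤ r ≤ k }`. -/
theorem disconnected_ribbon_LR_coefficient_count
    (L : List (List ℕ)) (hL : ∀ c ∈ L, c ≠ [] ∧ ∀ x ∈ c, 0 < x)
    (nu : List ℕ) (hnu : IsPartition nu) (hsum : nu.sum = (L.map List.sum).sum) :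
    Nat.card {w : List ℕ //
        IsRibbonWord L.flatten
          (fun j => decide
            (j + 1 ∉ (Finset.Icc 1 L.length).image fun r => ((L.take r).map List.length).sum))
          w ∧ IsYam w ∧ HasContent w nu} =
      Nat.card {U : ℕ × ℕ → ℕ //
        IsTab nu (List.replicate nu.sum 1) U ∧
        (∀ n, IsDescent nu U n → n ∈ Sset L.flatten) ∧
        (∀ n, n ∈ Sset L.flatten →
          (¬ ∃ r, 1 ≤ r ∧ r ≤ L.length ∧ n = ((L.take r).map List.sum).sum) →
          IsDescent nu U n)} := by
  have hpos : ∀ x ∈ L.flatten, 0 < x := by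
    intro x hx
    obtain ⟨c, hc, hxc⟩ := List.mem_flatten.1 hx
    exact (hL c hc).2 x hxc
  have hflat : nu.sum = L.flatten.sum := by rw [hsum, List.sum_flatten]
  have key := ribbon_iff L.flatten hpos
    (fun k => k ∈ (Finset.Icc 1 L.length).image fun r => ((L.take r).map List.length).sum)
    (fun n => ∃ r, 1 ≤ r ∧ r ≤ L.length ∧ n = ((L.take r).map List.sum).sum)
    (fun j => decide
      (j + 1 ∉ (Finset.Icc 1 L.length).image fun r => ((L.take r).map List.length).sum))
    (fun j => by rw [decide_eq_true_iff])
    (by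
      intro k hk0 hk
      simp only [Finset.mem_image, Finset.mem_Icc]
      constructor
      · rintro ⟨r, h1, h2, h3⟩
        refine ⟨r, ⟨h1, h2⟩, ?_⟩
        rw [block_sum] at h3
        rcases lt_trichotomy ((L.take r).map List.length).sum k with h | h | h
        · have := rowOffset_lt _ hpos h (by omega)
          omega
        · exact h
        · have := rowOffset_lt _ hpos h hk
          omega
      · rintro ⟨r, ⟨h1, h2⟩, h3⟩
        exact ⟨r, h1, h2, by rw [block_sum, h3]⟩)
  refine Nat.card_congr
    { toFun := fun w => ⟨UofW nu w.1, ?_⟩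
      invFun := fun U => ⟨WofU nu U.1, ?_⟩
      left_inv := ?_
      right_inv := ?_ }
  · obtain ⟨w, hR, hY, hC⟩ := w
    have hlen : w.length = nu.sum := by rw [hR.1, hflat]
    have hT := UofW_tab nu w hnu hlen hY hC
    refine ⟨hT, ?_⟩
    have := (key w hR.1).1 hR
    simp only [desc_iff nu _ hT, WofU_UofW nu w hlen hC]
    exact this
  · obtain ⟨U, hT, hD⟩ := U
    refine ⟨?_, W_yam nu U hT hnu, W_content nu U hT⟩
    simp only [desc_iff nu U hT] at hD
    exact (key _ (by simp [WofU, hflat])).2 hD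
  · rintro ⟨w, hR, hY, hC⟩
    exact Subtype.ext (WofU_UofW nu w (by rw [hR.1, hflat]) hC)
  · rintro ⟨U, hT, hD⟩
    exact Subtype.ext (UofW_WofU nu U hT)


end RibbonSupport
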